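/- arXiv:1607.05850 — 3 statements merged into one kernel-verified Lean document; each statement's English description precedes it below -/
import Mathlib

section
/- Let Γ = ((V,E),(V₁,V₂)) be a game graph with target sets T₁,…,T_k ⊆ V and parameter h with 1 ≤ h ≤ |V|, let (ρ_ℓ)_{1≤ℓ≤k} be the associated progress measure (the least fixed point of the update operator), and let W = {v ∈ V | ρ_ℓ(v) < ∞ for some ℓ}. Then for every vertex v and index ℓ with ρ_ℓ(v) < ∞, player 1 has a strategy to reach the set {v' ∈ T_ℓ | ρ_ℓ(v') = 0} from v, against any strategy of player 2, such that the play visits only vertices of W until that set is reached. -/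
open Classical

universe u

/-- A game graph: a directed graph `E` on vertex set `V` together with the set
`P1` of player-1 vertices; player-2 vertices are the complement of `P1`. -/
structure GameGraph (V : Type u) where
  E : V → V → Prop
  P1 : Set V

/-- The two players. -/
inductive Player : Type where
  | one : Player
  | two : Player

/-- The opponent of a player. -/
def Player.opp : Player → Player
  | .one => .two
  | .two => .one

/-- Select the first argument for player 1 and the second for player 2. -/
def Player.sel {α : Sort*} : Player → α → α → α
  | .one, a, _ => a
  | .two, _, b => b

variable {V : Type u}

/-- The vertices belonging to a player. -/
def GameGraph.verts (Γ : GameGraph V) : Player → Set V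
  | .one => Γ.P1
  | .two => Γ.P1ᶜ

/-- Every vertex has at least one outgoing edge. -/
def GameGraph.NoDead (Γ : GameGraph V) : Prop := ∀ v, ∃ w, Γ.E v w

/-- A (general, history-dependent) strategy: given the history of the play so far
(the vertices visited strictly before the current one) and the current vertex,
choose a next vertex. -/
abbrev Strat (V : Type u) : Type u := List V → V → V

/-- A strategy is memoryless if it depends only on the current vertex. -/
def Memoryless (σ : Strat V) : Prop := ∀ h h' v, σ h v = σ h' v

/-- A strategy is valid for player `p` if at every vertex of player `p` it
chooses a successor of that vertex. -/
def GameGraph.ValidFor (Γ : GameGraph V) (p : Player) (σ : Strat V) : Prop :=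
  ∀ hist v, v ∈ Γ.verts p → Γ.E v (σ hist v)

/-- One step of the play: the player-1 strategy moves at `P1`-vertices, the
player-2 strategy elsewhere. -/
noncomputable def GameGraph.step (Γ : GameGraph V) (σ π : Strat V)
    (hist : List V) (v : V) : V :=
  if v ∈ Γ.P1 then σ hist v else π hist v

/-- The play determined by a start vertex `v`, a player-1 strategy `σ` and a
player-2 strategy `π`, together with its history. -/
noncomputable def GameGraph.playAux (Γ : GameGraph V) (σ π : Strat V) (v : V) :
    ℕ → List V × V
  | 0 => ([], v)
  | n + 1 =>
      let q := Γ.playAux σ π v n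
      (q.1 ++ [q.2], Γ.step σ π q.1 q.2)

/-- The play determined by a start vertex `v`, a player-1 strategy `σ` and a
player-2 strategy `π`. -/
noncomputable def GameGraph.play (Γ : GameGraph V) (σ π : Strat V) (v : V)
    (n : ℕ) : V :=
  (Γ.playAux σ π v n).2

/-- The play from `v` where player `p` uses strategy `σ` and the opponent uses
strategy `τ`. -/
noncomputable def GameGraph.winPlay (Γ : GameGraph V) (p : Player)
    (σ τ : Strat V) (v : V) : ℕ → V :=
  Γ.play (p.sel σ τ) (p.sel τ σ) v

/-- Player `p` wins from `v` for objective `Ω`: player 1 wants the resulting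
play to lie in `Ω`, player 2 wants it to lie outside `Ω`. -/
def GameGraph.Wins (Γ : GameGraph V) (p : Player) (Ω : Set (ℕ → V)) (v : V) :
    Prop :=
  ∃ σ, Γ.ValidFor p σ ∧ ∀ τ, Γ.ValidFor p.opp τ →
    p.sel (Γ.winPlay p σ τ v ∈ Ω) (Γ.winPlay p σ τ v ∉ Ω)

/-- A player-`p` dominion for objective `Ω`: a nonempty set from each of whose
vertices player `p` has a winning strategy that moreover keeps the play inside
the set. -/
def GameGraph.Dominion (Γ : GameGraph V) (p : Player) (Ω : Set (ℕ → V))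
    (D : Set V) : Prop :=
  D.Nonempty ∧ ∀ v ∈ D, ∃ σ, Γ.ValidFor p σ ∧ ∀ τ, Γ.ValidFor p.opp τ →
    (p.sel (Γ.winPlay p σ τ v ∈ Ω) (Γ.winPlay p σ τ v ∉ Ω)) ∧
    ∀ n, Γ.winPlay p σ τ v n ∈ D

/-- The player-`p` attractor of `U`: the least set containing `U`, every
player-`p` vertex with some successor in it, and every opponent vertex all of
whose successors are in it. -/
inductive GameGraph.Attr (Γ : GameGraph V) (p : Player) (U : Set V) : V → Prop
  | base {v} : v ∈ U → GameGraph.Attr Γ p U v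
  | own {v w} : v ∈ Γ.verts p → Γ.E v w → GameGraph.Attr Γ p U w →
      GameGraph.Attr Γ p U v
  | opp {v} : v ∈ Γ.verts p.opp → (∀ w, Γ.E v w → GameGraph.Attr Γ p U w) →
      GameGraph.Attr Γ p U v

/-- The player-`p` attractor, as a set. -/
def GameGraph.attr (Γ : GameGraph V) (p : Player) (U : Set V) : Set V :=
  {v | Γ.Attr p U v}

/-- The iterative construction `R_j` of the player-`p` attractor. -/
def GameGraph.attrIter (Γ : GameGraph V) (p : Player) (U : Set V) : ℕ → Set V
  | 0 => U
  | n + 1 =>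
      Γ.attrIter p U n
        ∪ {v | v ∈ Γ.verts p ∧ ∃ w, Γ.E v w ∧ w ∈ Γ.attrIter p U n}
        ∪ {v | v ∈ Γ.verts p.opp ∧ ∀ w, Γ.E v w → w ∈ Γ.attrIter p U n}

/-- The `p`-rank of `v` with respect to `U`: the least `j` with `v ∈ R_j`, and
`∞` if there is no such `j`. -/
noncomputable def GameGraph.rank (Γ : GameGraph V) (p : Player) (U : Set V)
    (v : V) : ℕ∞ :=
  ⨅ n ∈ {n : ℕ | v ∈ Γ.attrIter p U n}, (n : ℕ∞)

/-- A set `U` is `p`-closed: every player-`p` vertex of `U` has all its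
successors in `U`, and every opponent vertex of `U` has some successor in `U`. -/
def GameGraph.PClosed (Γ : GameGraph V) (p : Player) (U : Set V) : Prop :=
  ∀ v ∈ U, (v ∈ Γ.verts p → ∀ w, Γ.E v w → w ∈ U) ∧
    (v ∈ Γ.verts p.opp → ∃ w, Γ.E v w ∧ w ∈ U)

/-- The induced game graph on a subset `U` of the vertices. -/
def GameGraph.sub (Γ : GameGraph V) (U : Set V) : GameGraph U where
  E a b := Γ.E (a : V) (b : V)
  P1 := {a : U | (a : V) ∈ Γ.P1}

/-- The game graph with the roles of the two players exchanged. -/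
def GameGraph.swap (Γ : GameGraph V) : GameGraph V where
  E := Γ.E
  P1 := Γ.P1ᶜ

/-- The set of vertices occurring infinitely often in a play. -/
def InfOcc (ω : ℕ → V) : Set V := {v | ∀ n, ∃ m, n ≤ m ∧ ω m = v}

/-- An objective is prefix-independent if membership of a play depends only on
the set of vertices visited infinitely often. -/
def PrefixIndep (Ω : Set (ℕ → V)) : Prop :=
  ∀ ω ω', InfOcc ω = InfOcc ω' → (ω ∈ Ω ↔ ω' ∈ Ω)

/-- The Büchi objective with target set `T`. -/
def BuchiObj (T : Set V) : Set (ℕ → V) := {ω | (InfOcc ω ∩ T).Nonempty}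

/-- The generalized Büchi objective with target sets `T i`. -/
def GenBuchiObj {ι : Sort*} (T : ι → Set V) : Set (ℕ → V) :=
  {ω | ∀ i, (InfOcc ω ∩ T i).Nonempty}

/-- The disjunctive co-Büchi objective with target sets `T i`. -/
def DisjCoBuchiObj {ι : Sort*} (T : ι → Set V) : Set (ℕ → V) :=
  {ω | ∃ i, InfOcc ω ∩ T i = ∅}

/-- The GR(1) objective with assumption sets `L t` and guarantee sets `U ℓ`. -/
def GR1Obj {ι₁ ι₂ : Sort*} (L : ι₁ → Set V) (U : ι₂ → Set V) : Set (ℕ → V) :=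
  {ω | (∀ t, (InfOcc ω ∩ L t).Nonempty) → ∀ ℓ, (InfOcc ω ∩ U ℓ).Nonempty}

/-- An objective on the full vertex set, restricted to plays of the induced
game graph on `U`. -/
def subObj (U : Set V) (Ω : Set (ℕ → V)) : Set (ℕ → ↥U) :=
  {ω | (fun n => (ω n : V)) ∈ Ω}

/-- The out-degree of a vertex. -/
noncomputable def GameGraph.outDeg (Γ : GameGraph V) (v : V) : ℕ :=
  {w | Γ.E v w}.ncard

/-- A hierarchical graph decomposition of a game graph `Γ`: for every vertex
`v`, `idx v` enumerates the incoming edges of `v` (i.e., their sources) by the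
positions `0, …, indeg(v) − 1`, listing edges from player-2 vertices first. -/
structure HierDecomp (Γ : GameGraph V) where
  idx : V → V → ℕ
  idx_inj : ∀ v u u', Γ.E u v → Γ.E u' v → idx v u = idx v u' → u = u'
  idx_lt : ∀ v u, Γ.E u v → idx v u < {u' | Γ.E u' v}.ncard
  p2_first : ∀ v u u', Γ.E u v → Γ.E u' v → u ∉ Γ.P1 → u' ∈ Γ.P1 →
      idx v u < idx v u'

/-- The `i`-th level `Γ_i = (G_i, (V₁,V₂))` of the hierarchical graph
decomposition: `G_i` keeps all outgoing edges of vertices of out-degree at most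
`2^i`, and the first `2^i` incoming edges of every vertex. -/
def HierDecomp.graph {Γ : GameGraph V} (H : HierDecomp Γ) (i : ℕ) :
    GameGraph V where
  E u v := Γ.E u v ∧ (Γ.outDeg u ≤ 2 ^ i ∨ H.idx v u < 2 ^ i)
  P1 := Γ.P1

/-- The exception set `Z_i`: player-2 vertices with no outgoing edge in `G_i`
together with player-1 vertices with more than `2^i` outgoing edges in `G`. -/
def HierDecomp.Z {Γ : GameGraph V} (H : HierDecomp Γ) (i : ℕ) : Set V :=
  {v | v ∉ Γ.P1 ∧ ¬ ∃ w, (H.graph i).E v w} ∪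
    {v | v ∈ Γ.P1 ∧ 2 ^ i < Γ.outDeg v}

/-- Cyclic successor `ℓ ⊕ 1` on `Fin k`. -/
def finSucc {k : ℕ} (ℓ : Fin k) : Fin k :=
  ⟨(ℓ.val + 1) % k, Nat.mod_lt _ (Nat.lt_of_le_of_lt (Nat.zero_le _) ℓ.isLt)⟩

/-- The bound `n̄ = min (h − 1) |V ∖ T|` of the progress measure. -/
noncomputable def nbar (h : ℕ) (T : Set V) : ℕ := min (h - 1) Tᶜ.ncard

/-- The value of the best successor of `v` for the player owning `v`. -/
noncomputable def GameGraph.best (Γ : GameGraph V) {k : ℕ} (T : Fin k → Set V)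
    (ρ : Fin k → V → ℕ∞) (ℓ : Fin k) (v : V) : ℕ∞ :=
  let ℓ' := if v ∈ T ℓ then finSucc ℓ else ℓ
  if v ∈ Γ.P1 then ⨅ w ∈ {w | Γ.E v w}, ρ ℓ' w
  else ⨆ w ∈ {w | Γ.E v w}, ρ ℓ' w

/-- The increment operation `incr` of the progress measure (for the pair
`(v, ℓ)`). -/
noncomputable def pmIncr (h : ℕ) {k : ℕ} (T : Fin k → Set V) (ℓ : Fin k)
    (v : V) (x : ℕ∞) : ℕ∞ :=
  if v ∈ T ℓ ∧ x ≠ ⊤ then 0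
  else if x < (nbar h (T ℓ) : ℕ∞) then x + 1 else ⊤

/-- The update operator of the progress measure: update `ρ ℓ v` to
`max (ρ ℓ v) (incr (best v))`. -/
noncomputable def GameGraph.pmStep (Γ : GameGraph V) (h : ℕ) {k : ℕ}
    (T : Fin k → Set V) (ρ : Fin k → V → ℕ∞) : Fin k → V → ℕ∞ :=
  fun ℓ v => max (ρ ℓ v) (pmIncr h T ℓ v (Γ.best T ρ ℓ v))

/-- `ρ` is the progress measure associated with `Γ`, `T` and `h`: the least
fixed point (starting from the all-zero functions, i.e., the least one) of the
update operator. -/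
def GameGraph.IsProgressMeasure (Γ : GameGraph V) (h : ℕ) {k : ℕ}
    (T : Fin k → Set V) (ρ : Fin k → V → ℕ∞) : Prop :=
  Γ.pmStep h T ρ = ρ ∧ ∀ ρ', Γ.pmStep h T ρ' = ρ' → ∀ ℓ v, ρ ℓ v ≤ ρ' ℓ v

/-- Player `p` can force, from `v`, that the play stays in `D` forever and
visits every target set `T i` infinitely often. -/
def GameGraph.ForcesStayBuchi (Γ : GameGraph V) (p : Player) (D : Set V)
    {ι : Sort*} (T : ι → Set V) (v : V) : Prop :=
  ∃ σ, Γ.ValidFor p σ ∧ ∀ τ, Γ.ValidFor p.opp τ →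
    (∀ n, Γ.winPlay p σ τ v n ∈ D) ∧
    ∀ i n, ∃ m, n ≤ m ∧ Γ.winPlay p σ τ v m ∈ T i


theorem pm_incr_mono (h : ℕ) {k : ℕ} (T : Fin k → Set V) (ℓ : Fin k)
    (v : V) {x y : ℕ∞} (hxy : x ≤ y) : pmIncr h T ℓ v x ≤ pmIncr h T ℓ v y := by
  unfold pmIncr
  by_cases hv : v ∈ T ℓ
  · by_cases hx : x = ⊤
    · subst hx
      have : y = ⊤ := top_le_iff.mp hxy
      subst this
      exact le_rfl
    · simp [hv, hx]
  · simp only [hv, false_and, if_false]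
    by_cases hy : y < (nbar h (T ℓ) : ℕ∞)
    · rw [if_pos hy, if_pos (lt_of_le_of_lt hxy hy)]
      gcongr
    · rw [if_neg hy]
      exact le_top

theorem pm_best_mono (Γ : GameGraph V) {k : ℕ} (T : Fin k → Set V)
    {ρ ρ' : Fin k → V → ℕ∞} (hle : ∀ ℓ v, ρ ℓ v ≤ ρ' ℓ v) (ℓ : Fin k) (v : V) :
    Γ.best T ρ ℓ v ≤ Γ.best T ρ' ℓ v := by
  unfold GameGraph.best
  dsimp only
  by_cases hv : v ∈ Γ.P1
  · rw [if_pos hv, if_pos hv]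
    exact iInf₂_mono fun w _ => hle _ w
  · rw [if_neg hv, if_neg hv]
    exact iSup₂_mono fun w _ => hle _ w

theorem pm_incr_top (h : ℕ) {k : ℕ} (T : Fin k → Set V) (ℓ : Fin k)
    (v : V) : pmIncr h T ℓ v ⊤ = ⊤ := by
  simp [pmIncr]

theorem pm_incr_le {Γ : GameGraph V} {h k : ℕ} {T : Fin k → Set V}
    {ρ : Fin k → V → ℕ∞} (hρ : Γ.IsProgressMeasure h T ρ) (ℓ : Fin k) (v : V) :
    pmIncr h T ℓ v (Γ.best T ρ ℓ v) ≤ ρ ℓ v := by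
  have := congrFun (congrFun hρ.1 ℓ) v
  unfold GameGraph.pmStep at this
  exact max_eq_left_iff.mp this

theorem pm_target_zero {Γ : GameGraph V} {h k : ℕ} {T : Fin k → Set V}
    {ρ : Fin k → V → ℕ∞} (hρ : Γ.IsProgressMeasure h T ρ) {ℓ : Fin k} {v : V}
    (hv : v ∈ T ℓ) (hfin : ρ ℓ v ≠ ⊤) : ρ ℓ v = 0 := by
  set ρ' : Fin k → V → ℕ∞ := fun l u => if u ∈ T l ∧ ρ l u ≠ ⊤ then 0 else ρ l u with hρ'
  have hle : ∀ l u, ρ' l u ≤ ρ l u := by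
    intro l u
    simp only [hρ']
    split_ifs
    · exact zero_le
    · exact le_rfl
  have hfix : Γ.pmStep h T ρ' = ρ' := by
    funext l u
    unfold GameGraph.pmStep
    refine max_eq_left ?_
    have h1 := (pm_incr_mono h T l u (pm_best_mono Γ T hle l u)).trans (pm_incr_le hρ l u)
    by_cases hc : u ∈ T l ∧ ρ l u ≠ ⊤
    · have hb : Γ.best T ρ' l u ≠ ⊤ := by
        intro hb
        rw [hb, pm_incr_top] at h1
        exact hc.2 (top_le_iff.mp h1)
      unfold pmIncr
      rw [if_pos ⟨hc.1, hb⟩]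
      exact zero_le
    · have : ρ' l u = ρ l u := by simp only [hρ']; rw [if_neg hc]
      rw [this]
      exact h1
  have h2 := hρ.2 ρ' hfix ℓ v
  have h3 : ρ' ℓ v = 0 := by simp only [hρ']; rw [if_pos ⟨hv, hfin⟩]
  rw [h3] at h2
  exact le_zero_iff.mp h2

theorem pm_best_lt {Γ : GameGraph V} {h k : ℕ} {T : Fin k → Set V}
    {ρ : Fin k → V → ℕ∞} (hρ : Γ.IsProgressMeasure h T ρ) {ℓ : Fin k} {v : V}
    (hv : v ∉ T ℓ) (hfin : ρ ℓ v ≠ ⊤) : Γ.best T ρ ℓ v < ρ ℓ v := by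
  have h1 := pm_incr_le hρ ℓ v
  unfold pmIncr at h1
  simp only [hv, false_and, if_false] at h1
  split_ifs at h1 with hc
  · exact lt_of_lt_of_le (ENat.lt_add_one_iff (ne_top_of_lt hc) |>.mpr le_rfl) h1
  · exact absurd (top_le_iff.mp h1) hfin

/-- for the progress measure `ρ`, if `ρ ℓ v < ∞` then player 1
has a strategy to reach `{v' ∈ T ℓ | ρ ℓ v' = 0}` from `v` against any player-2
strategy, visiting only vertices of `W = {u | ∃ ℓ', ρ ℓ' u < ∞}` until that set
is reached. -/
theorem progress_measure_reach_target {V : Type u} [Finite V]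
    (Γ : GameGraph V) (hΓ : Γ.NoDead) {k : ℕ} (T : Fin k → Set V)
    (h : ℕ) (hh1 : 1 ≤ h) (hh2 : h ≤ Nat.card V)
    (ρ : Fin k → V → ℕ∞) (hρ : Γ.IsProgressMeasure h T ρ)
    (v : V) (ℓ : Fin k) (hfin : ρ ℓ v ≠ ⊤) :
    ∃ σ, Γ.ValidFor Player.one σ ∧ ∀ τ, Γ.ValidFor Player.two τ →
      ∃ n, Γ.play σ τ v n ∈ {v' | v' ∈ T ℓ ∧ ρ ℓ v' = 0} ∧
        ∀ m ≤ n, Γ.play σ τ v m ∈ {u | ∃ ℓ' : Fin k, ρ ℓ' u ≠ ⊤} := by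
  have hex : ∀ u, ∃ w, Γ.E u w ∧ ∀ w', Γ.E u w' → ρ ℓ w ≤ ρ ℓ w' := by
    intro u
    obtain ⟨w, hw, hmin⟩ := Set.exists_min_image {w | Γ.E u w} (ρ ℓ) (Set.toFinite _) (hΓ u)
    exact ⟨w, hw, hmin⟩
  choose f hfE hfmin using hex
  refine ⟨fun _ u => f u, fun _ u _ => hfE u, fun τ hτ => ?_⟩
  set p := Γ.play (fun _ u => f u) τ v with hp
  have hstep : ∀ n, p n ∉ T ℓ → ρ ℓ (p n) ≠ ⊤ → ρ ℓ (p (n + 1)) < ρ ℓ (p n) := by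
    intro n hn hf
    refine lt_of_le_of_lt ?_ (pm_best_lt hρ hn hf)
    unfold GameGraph.best
    dsimp only
    rw [if_neg hn]
    have hs : p (n + 1) = Γ.step (fun _ u => f u) τ
        (Γ.playAux (fun _ u => f u) τ v n).1 (p n) := rfl
    rw [hs]
    unfold GameGraph.step
    by_cases h1 : p n ∈ Γ.P1
    · rw [if_pos h1, if_pos h1]
      exact le_iInf₂ fun w hw => hfmin _ w hw
    · rw [if_neg h1, if_neg h1]
      exact le_iSup₂_of_le (τ _ (p n)) (hτ _ _ h1) le_rfl
  have key : ∀ d : ℕ∞, ∀ n, ρ ℓ (p n) = d → d ≠ ⊤ →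
      ∃ n', n ≤ n' ∧ (p n' ∈ T ℓ ∧ ρ ℓ (p n') = 0) ∧
        ∀ m, n ≤ m → m ≤ n' → ρ ℓ (p m) ≠ ⊤ := by
    intro d
    induction d using WellFoundedLT.induction with
    | ind d ih =>
      intro n hd hdt
      subst hd
      by_cases hn : p n ∈ T ℓ
      · refine ⟨n, le_rfl, ⟨hn, pm_target_zero hρ hn hdt⟩, fun m h1 h2 => ?_⟩
        rwa [le_antisymm h2 h1]
      · have hlt := hstep n hn hdt
        obtain ⟨n', h1, h2, h3⟩ := ih _ hlt (n + 1) rfl (ne_top_of_lt hlt)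
        refine ⟨n', by omega, h2, fun m h4 h5 => ?_⟩
        rcases Nat.eq_or_lt_of_le h4 with h6 | h6
        · rwa [← h6]
        · exact h3 m h6 h5
  obtain ⟨n, _, h2, h3⟩ := key _ 0 rfl hfin
  exact ⟨n, h2, fun m hm => ⟨ℓ, h3 m (Nat.zero_le _) hm⟩⟩
end

section
/- Let Γ = ((V,E),(V₁,V₂)) be a game graph with GR(1) objective given by target sets L₁,…,L_{k₁} and U₁,…,U_{k₂}, let {G_i} and {Z_i} be its hierarchical graph decomposition and exception sets, and for indices i ≥ 1 and 1 ≤ ℓ ≤ k₂ let Y_{i,ℓ} = Attr₁(Γ_i, U_ℓ ∪ Z_i). Suppose X ⊆ V ∖ Y_{i,ℓ} is nonempty and player 2 has, from every vertex of X, a strategy in the induced game graph Γ_i[V ∖ Y_{i,ℓ}] that guarantees, against any strategy of player 1, that the play stays in X and visits every set L_t ∖ Y_{i,ℓ} (1 ≤ t ≤ k₁) infinitely often. Then X is a player-2 dominion in the GR(1) game on Γ, and X ∩ U_ℓ = ∅. -/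
open Classical

universe u

variable {V : Type u}

/-- with `Y = Attr₁(Γ_i, U ℓ ∪ Z_i)`, if from every vertex of a
nonempty set `X ⊆ V ∖ Y` player 2 can force, in the induced subgame
`Γ_i[V ∖ Y]`, that the play stays in `X` and visits every `L t ∖ Y` infinitely
often, then `X` is a player-2 dominion in the GR(1) game on `Γ` and
`X ∩ U ℓ = ∅`. -/
theorem hier_gr1_dominion_sound {V : Type u} [Finite V]
    (Γ : GameGraph V) (hΓ : Γ.NoDead) (H : HierDecomp Γ)
    {k₁ k₂ : ℕ} (L : Fin k₁ → Set V) (U : Fin k₂ → Set V)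
    (i : ℕ) (hi : 1 ≤ i) (ℓ : Fin k₂) (Y : Set V)
    (hY : Y = (H.graph i).attr Player.one (U ℓ ∪ H.Z i))
    (X : Set V) (hXsub : X ⊆ Yᶜ) (hXne : X.Nonempty)
    (hforce : ∀ v : ↥Yᶜ, (v : V) ∈ X →
      ((H.graph i).sub Yᶜ).ForcesStayBuchi Player.two
        {x : ↥Yᶜ | (x : V) ∈ X}
        (fun t : Fin k₁ => {x : ↥Yᶜ | (x : V) ∈ L t \ Y}) v) :
    Γ.Dominion Player.two (GR1Obj L U) X ∧ X ∩ U ℓ = ∅ := by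
  have hU : ∀ x, x ∉ Y → x ∉ U ℓ := by
    intro x hx hxU
    apply hx
    rw [hY]
    exact GameGraph.Attr.base (Or.inl hxU)
  -- player-1 vertices outside `Y` keep all their edges, none of which enters `Y`
  have hP1 : ∀ x, x ∉ Y → x ∈ Γ.P1 → ∀ w, Γ.E x w → (H.graph i).E x w ∧ w ∉ Y := by
    intro x hx hx1 w hw
    have hd : Γ.outDeg x ≤ 2 ^ i := by
      by_contra hcon
      apply hx
      rw [hY]
      exact GameGraph.Attr.base (Or.inr (Or.inr ⟨hx1, not_le.mp hcon⟩))
    have he : (H.graph i).E x w := ⟨hw, Or.inl hd⟩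
    refine ⟨he, fun hwY => hx ?_⟩
    rw [hY] at hwY ⊢
    exact GameGraph.Attr.own (p := Player.one) hx1 he hwY
  have hXU : X ∩ U ℓ = ∅ := by
    ext x
    simp only [Set.mem_inter_iff, Set.mem_empty_iff_false, iff_false, not_and]
    exact fun hx => hU x (hXsub hx)
  refine ⟨⟨hXne, ?_⟩, hXU⟩
  intro v hv
  obtain ⟨σ, hσ, hwin⟩ := hforce ⟨v, hXsub hv⟩ hv
  let lift : V → ↥Yᶜ := fun w => if h : w ∈ Yᶜ then ⟨w, h⟩ else ⟨v, hXsub hv⟩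
  have hlift : ∀ w : ↥Yᶜ, lift (w : V) = w := by
    intro w
    simp only [lift, dif_pos w.2]
  choose nxt hnxt using hΓ
  let σ' : Strat V := fun h w =>
    if w ∈ Yᶜ then ((σ (h.map lift) (lift w) : ↥Yᶜ) : V) else nxt w
  refine ⟨σ', ?_, ?_⟩
  · intro h w hw
    by_cases hwY : w ∈ Yᶜ
    · have h1 := hσ (h.map lift) ⟨w, hwY⟩ hw
      have h2 : lift w = ⟨w, hwY⟩ := hlift ⟨w, hwY⟩
      simp only [σ', if_pos hwY, h2]
      exact h1.1
    · simp only [σ', if_neg hwY]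
      exact hnxt w
  · intro τ hτ
    let τ' : Strat ↥Yᶜ := fun h w => lift (τ (h.map Subtype.val) w)
    have hval : ∀ (h : List V) (w : ↥Yᶜ), (w : V) ∈ Γ.P1 → τ h w ∈ Yᶜ := by
      intro h w hw
      exact (hP1 w w.2 hw _ (hτ h w hw)).2
    have hτ'v : ∀ (h : List ↥Yᶜ) (w : ↥Yᶜ), (w : V) ∈ Γ.P1 →
        ((τ' h w : ↥Yᶜ) : V) = τ (h.map Subtype.val) w := by
      intro h w hw
      have := hlift ⟨_, hval (h.map Subtype.val) w hw⟩
      simp only [τ']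
      rw [this]
    have hτ' : ((H.graph i).sub Yᶜ).ValidFor Player.two.opp τ' := by
      intro h w hw
      have hw1 : (w : V) ∈ Γ.P1 := hw
      change (H.graph i).E (w : V) (τ' h w : ↥Yᶜ)
      rw [hτ'v h w hw1]
      exact (hP1 w w.2 hw1 _ (hτ _ w hw1)).1
    obtain ⟨hstay, hbuchi⟩ := hwin τ' hτ'
    have hlm : ∀ l : List ↥Yᶜ, (l.map Subtype.val).map lift = l := by
      intro l
      rw [List.map_map]
      conv_rhs => rw [← List.map_id l]
      exact List.map_congr_left (fun w _ => hlift w)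
    have hsim : ∀ n, Γ.playAux τ σ' v n =
        ((((H.graph i).sub Yᶜ).playAux τ' σ ⟨v, hXsub hv⟩ n).1.map Subtype.val,
          ((((H.graph i).sub Yᶜ).playAux τ' σ ⟨v, hXsub hv⟩ n).2 : V)) := by
      intro n
      induction n with
      | zero => rfl
      | succ n ih =>
        simp only [GameGraph.playAux]
        rw [ih]
        generalize ((H.graph i).sub Yᶜ).playAux τ' σ ⟨v, hXsub hv⟩ n = q
        obtain ⟨h, w⟩ := q
        refine Prod.ext (by simp) ?_
        simp only [GameGraph.step]
        by_cases hw : (w : V) ∈ Γ.P1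
        · have hw' : w ∈ ((H.graph i).sub Yᶜ).P1 := hw
          rw [if_pos hw, if_pos hw', hτ'v h w hw]
        · have hw' : w ∉ ((H.graph i).sub Yᶜ).P1 := hw
          rw [if_neg hw, if_neg hw']
          simp only [σ', if_pos w.2, hlm, hlift]
    have hplay : ∀ n, Γ.winPlay Player.two σ' τ v n =
        ((((H.graph i).sub Yᶜ).winPlay Player.two σ τ' ⟨v, hXsub hv⟩ n : ↥Yᶜ) : V) :=
      fun n => congrArg Prod.snd (hsim n)
    have hD : ∀ n, Γ.winPlay Player.two σ' τ v n ∈ X := by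
      intro n
      rw [hplay n]
      exact hstay n
    refine ⟨?_, hD⟩
    change ¬ (_ ∈ GR1Obj L U)
    intro hΩ
    obtain ⟨x, hxI, hxU⟩ := hΩ (fun t => by
      by_contra hne
      have hfin : ∀ x : V, ∃ n, x ∈ L t → ∀ m, n ≤ m →
          Γ.winPlay Player.two σ' τ v m ≠ x := by
        intro x
        by_contra hcon
        push Not at hcon
        exact hne ⟨x, fun n => (hcon n).2, (hcon 0).1⟩
      choose N hN using hfin
      obtain ⟨M, hM⟩ := (Set.finite_range N).bddAbove
      obtain ⟨m, hm, hmL⟩ := hbuchi t M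
      have hmL' : Γ.winPlay Player.two σ' τ v m ∈ L t := by
        rw [hplay m]
        exact hmL.1
      exact hN _ hmL' m (le_trans (hM ⟨_, rfl⟩) hm) rfl) ℓ
    obtain ⟨m, -, hm⟩ := hxI 0
    exact hU x (hXsub (hm ▸ hD m)) hxU
end

section
/- Let Γ = ((V,E),(V₁,V₂)) be a game graph with GR(1) objective given by target sets L₁,…,L_{k₁} and U₁,…,U_{k₂}, let {G_i} and {Z_i} be its hierarchical graph decomposition and exception sets, and for indices i ≥ 1 and 1 ≤ ℓ ≤ k₂ let Y_{i,ℓ} = Attr₁(Γ_i, U_ℓ ∪ Z_i). Suppose D ⊆ V is a set such that player 2 has, from every vertex of D, a strategy in Γ that guarantees, against any strategy of player 1, that the play stays in D and visits every set L_t (1 ≤ t ≤ k₁) infinitely often; suppose further D ∩ U_ℓ = ∅ and |Attr₂(Γ,D)| ≤ 2^i. Then D ⊆ V ∖ Y_{i,ℓ}, and player 2 has, from every vertex of D, a strategy in the induced game graph Γ_i[V ∖ Y_{i,ℓ}] that guarantees, against any strategy of player 1, that the play stays in D and visits every set L_t ∖ Y_{i,ℓ} infinitely often. -/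
open Classical

universe u

variable {V : Type u}

lemma hd_closed1 {V : Type u} {Γ : GameGraph V} (hΓ : Γ.NoDead) {ι : Sort*} {L : ι → Set V}
    {D : Set V} (hforce : ∀ v ∈ D, Γ.ForcesStayBuchi Player.two D L v)
    {v w : V} (hv : v ∈ D) (hP : v ∈ Γ.P1) (hE : Γ.E v w) : w ∈ D := by
  obtain ⟨σ, hσ, h⟩ := hforce v hv
  choose d hd using hΓ
  have := (h (fun _ y => if y = v then w else d y) (by
    intro hist y _
    by_cases hy : y = v
    · subst hy; simpa using hE
    · simpa [hy] using hd y)).1 1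
  simpa [GameGraph.winPlay, GameGraph.play, GameGraph.playAux, GameGraph.step, Player.sel, hP]
    using this

lemma hd_closed2 {V : Type u} {Γ : GameGraph V} (hΓ : Γ.NoDead) {ι : Sort*} {L : ι → Set V}
    {D : Set V} (hforce : ∀ v ∈ D, Γ.ForcesStayBuchi Player.two D L v)
    {v : V} (hv : v ∈ D) (hP : v ∉ Γ.P1) : ∃ w, Γ.E v w ∧ w ∈ D := by
  obtain ⟨σ, hσ, h⟩ := hforce v hv
  choose d hd using hΓ
  have := (h (fun _ y => d y) (fun _ y _ => hd y)).1 1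
  refine ⟨σ [] v, hσ [] v hP, ?_⟩
  simpa [GameGraph.winPlay, GameGraph.play, GameGraph.playAux, GameGraph.step, Player.sel, hP]
    using this

lemma hd_idx {V : Type u} [Finite V] {Γ : GameGraph V} (H : HierDecomp Γ) {D : Set V} {N : ℕ}
    (hsize : (Γ.attr Player.two D).ncard ≤ N) {v w : V} (hP : v ∉ Γ.P1) (hE : Γ.E v w)
    (hw : w ∈ D) : H.idx w v < N := by
  set S : Set V := {u | Γ.E u w} with hS
  have hinj : Set.InjOn (H.idx w) S := fun a ha b hb h => H.idx_inj w a b ha hb h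
  have himg : H.idx w '' S = Set.Iio S.ncard := by
    apply Set.eq_of_subset_of_ncard_le
    · rintro _ ⟨u, hu, rfl⟩
      exact H.idx_lt w u hu
    · rw [hinj.ncard_image]
      simp [Set.ncard_eq_toFinset_card']
    · exact Set.finite_Iio _
  have hsub : Set.Iic (H.idx w v) ⊆ H.idx w '' (Γ.attr Player.two D) := by
    intro j hj
    have : j ∈ H.idx w '' S := by
      rw [himg]; exact lt_of_le_of_lt hj (H.idx_lt w v hE)
    obtain ⟨u, hu, rfl⟩ := this
    refine ⟨u, ?_, rfl⟩
    have hu1 : u ∉ Γ.P1 := fun h1 =>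
      absurd (H.p2_first w v u hE hu hP h1) (not_lt.mpr hj)
    exact GameGraph.Attr.own hu1 hu (GameGraph.Attr.base hw)
  have h1 := Set.ncard_le_ncard hsub (Set.toFinite _)
  have h2 := Set.ncard_image_le (f := H.idx w) (Set.toFinite (Γ.attr Player.two D))
  have h3 : (Set.Iic (H.idx w v)).ncard = H.idx w v + 1 := by
    simp [Set.ncard_eq_toFinset_card']
  omega

/-- with `Y = Attr₁(Γ_i, U ℓ ∪ Z_i)`, if player 2 can force from
every vertex of `D` (in `Γ`) that the play stays in `D` and visits every `L t`
infinitely often, `D ∩ U ℓ = ∅` and `|Attr₂(Γ,D)| ≤ 2^i`, then `D ⊆ V ∖ Y` and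
player 2 can force, from every vertex of `D` in the induced subgame
`Γ_i[V ∖ Y]`, that the play stays in `D` and visits every `L t ∖ Y` infinitely
often. -/
theorem hier_gr1_dominion_size {V : Type u} [Finite V]
    (Γ : GameGraph V) (hΓ : Γ.NoDead) (H : HierDecomp Γ)
    {k₁ k₂ : ℕ} (L : Fin k₁ → Set V) (U : Fin k₂ → Set V)
    (i : ℕ) (hi : 1 ≤ i) (ℓ : Fin k₂) (Y : Set V)
    (hY : Y = (H.graph i).attr Player.one (U ℓ ∪ H.Z i))
    (D : Set V)
    (hforce : ∀ v ∈ D, Γ.ForcesStayBuchi Player.two D L v)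
    (hdis : D ∩ U ℓ = ∅)
    (hsize : (Γ.attr Player.two D).ncard ≤ 2 ^ i) :
    D ⊆ Yᶜ ∧
    ∀ v : ↥Yᶜ, (v : V) ∈ D →
      ((H.graph i).sub Yᶜ).ForcesStayBuchi Player.two
        {x : ↥Yᶜ | (x : V) ∈ D}
        (fun t : Fin k₁ => {x : ↥Yᶜ | (x : V) ∈ L t \ Y}) v := by
  have hc1 : ∀ v w, v ∈ D → v ∈ Γ.P1 → Γ.E v w → w ∈ D :=
    fun v w hv hP hE => hd_closed1 hΓ hforce hv hP hE
  have hc2 : ∀ v, v ∈ D → v ∉ Γ.P1 → ∃ w, Γ.E v w ∧ w ∈ D :=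
    fun v hv hP => hd_closed2 hΓ hforce hv hP
  have hed : ∀ v w, v ∉ Γ.P1 → Γ.E v w → w ∈ D → (H.graph i).E v w :=
    fun v w hP hE hw => ⟨hE, Or.inr (hd_idx H hsize hP hE hw)⟩
  have hDsub : D ⊆ Γ.attr Player.two D := fun x hx => GameGraph.Attr.base hx
  have hDY : D ⊆ Yᶜ := by
    intro v hv hvY
    rw [hY] at hvY
    replace hvY : (H.graph i).Attr Player.one (U ℓ ∪ H.Z i) v := hvY
    revert hv
    induction hvY with
    | @base v h =>
      intro hv
      rcases h with h | ⟨hP, h⟩ | ⟨hP, h⟩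
      · exact (Set.mem_empty_iff_false v).mp (hdis ▸ ⟨hv, h⟩)
      · obtain ⟨w, hw, hwD⟩ := hc2 v hv hP
        exact h ⟨w, hed v w hP hw hwD⟩
      · have : {w | Γ.E v w} ⊆ Γ.attr Player.two D :=
          fun w hw => hDsub (hc1 v w hv hP hw)
        have := Set.ncard_le_ncard this (Set.toFinite _)
        unfold GameGraph.outDeg at h
        omega
    | @own v w hP hE _ ih => exact fun hv => ih (hc1 v w hv hP hE.1)
    | @opp v hP _ ih =>
      intro hv
      obtain ⟨w, hw, hwD⟩ := hc2 v hv hP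
      exact ih w (hed v w hP hw hwD) hwD
  refine ⟨hDY, ?_⟩
  intro v0 hv0
  obtain ⟨σ, hσ, hwin⟩ := hforce v0 hv0
  choose d hd using hΓ
  have hsucc : ∀ x : ↥Yᶜ, (x : V) ∉ Γ.P1 → ∃ y : ↥Yᶜ, (H.graph i).E x y := by
    intro x hx
    by_contra hcon
    push Not at hcon
    apply x.2
    refine (Set.ext_iff.mp hY _).mpr ?_
    refine GameGraph.Attr.opp hx ?_
    intro w hw
    by_contra hwY
    exact hcon ⟨w, by rw [hY]; exact hwY⟩ hw
  have hex : ∀ (h : List ↥Yᶜ) (x : ↥Yᶜ), ∃ y : ↥Yᶜ,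
      ((x : V) ∉ Γ.P1 → (H.graph i).E x y) ∧
      ((x : V) ∉ Γ.P1 → σ (h.map Subtype.val) x ∈ D → (y : V) = σ (h.map Subtype.val) x) := by
    intro h x
    by_cases hx : (x : V) ∈ Γ.P1
    · exact ⟨x, fun h => absurd hx h, fun h => absurd hx h⟩
    by_cases hD : σ (h.map Subtype.val) x ∈ D
    · exact ⟨⟨_, hDY hD⟩, fun _ => hed _ _ hx (hσ _ _ hx) hD, fun _ _ => rfl⟩
    · obtain ⟨y, hy⟩ := hsucc x hx
      exact ⟨y, fun _ => hy, fun _ h => absurd h hD⟩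
  choose σ' hσ1 hσ2 using hex
  refine ⟨σ', fun h x hx => hσ1 h x hx, ?_⟩
  intro τ' hτ'
  let g : V → ↥Yᶜ := fun y => if h : y ∈ Yᶜ then ⟨y, h⟩ else v0
  have hg : ∀ x : ↥Yᶜ, g x = x := fun x => by
    have := x.2
    simp only [g, dif_pos this]
  have hgm : ∀ h : List ↥Yᶜ, (h.map Subtype.val).map g = h := fun h => by
    rw [List.map_map]
    conv_rhs => rw [← List.map_id h]
    exact List.map_congr_left fun x _ => hg x
  let τ : Strat V := fun h y => if y ∈ Yᶜ then (τ' (h.map g) (g y) : V) else d y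
  have hτ : Γ.ValidFor Player.two.opp τ := by
    intro h y hy
    by_cases hyY : y ∈ Yᶜ
    · have h1 : ((H.graph i).sub Yᶜ).E (g y) (τ' (h.map g) (g y)) := by
        apply hτ'
        rw [hg ⟨y, hyY⟩]
        exact hy
      have h2 := h1.1
      rw [hg ⟨y, hyY⟩] at h2
      simp only [τ, if_pos hyY]
      rw [hg ⟨y, hyY⟩]
      exact h2
    · simp only [τ, if_neg hyY]
      exact hd y
  obtain ⟨hstay, hvis⟩ := hwin τ hτ
  have key : ∀ n, Γ.playAux τ σ v0 n =
      ((((H.graph i).sub Yᶜ).playAux τ' σ' v0 n).1.map Subtype.val,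
        ((((H.graph i).sub Yᶜ).playAux τ' σ' v0 n).2 : V)) := by
    intro n
    induction n with
    | zero => rfl
    | succ n ih =>
      have hn := hstay (n + 1)
      simp only [GameGraph.winPlay, GameGraph.play, Player.sel, GameGraph.playAux] at hn
      simp only [GameGraph.playAux]
      rw [ih] at hn ⊢
      generalize ((H.graph i).sub Yᶜ).playAux τ' σ' v0 n = q at hn ⊢
      obtain ⟨h, x⟩ := q
      refine Prod.ext (by simp) ?_
      simp only [GameGraph.step] at hn ⊢
      have hiff : x ∈ ((H.graph i).sub Yᶜ).P1 ↔ (x : V) ∈ Γ.P1 := Iff.rfl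
      by_cases hx : (x : V) ∈ Γ.P1
      · rw [if_pos hx, if_pos (hiff.2 hx)]
        simp only [τ, if_pos x.2]
        rw [hgm, hg]
      · rw [if_neg hx] at hn
        rw [if_neg hx, if_neg (fun h => hx (hiff.1 h))]
        exact (hσ2 h x hx hn).symm
  have key2 : ∀ n, Γ.winPlay Player.two σ τ v0 n =
      (((H.graph i).sub Yᶜ).winPlay Player.two σ' τ' v0 n : V) := fun n =>
    congrArg Prod.snd (key n)
  constructor
  · intro n
    have := hstay n
    rw [key2] at this
    exact this
  · intro t n
    obtain ⟨m, hm, hmL⟩ := hvis t n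
    have hmD := hstay m
    rw [key2] at hmL hmD
    exact ⟨m, hm, hmL, hDY hmD⟩
end
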